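/- arXiv:2512.20456 — 2 statements merged into one kernel-verified Lean document; each statement's English description precedes it below -/
import Mathlib

section
/- Let G be a simple graph on the vertex set {1,…,n} (n ≥ 0). Then the signed sum Σ (−1)^{n−r}, taken over all ordered set partitions (L_1,…,L_r) of the vertex set into independent sets of G, equals the number of acyclic orientations of G. (This is the reduced, millipede form of the paper's Theorem on graphically stable moduli spaces: after the up-down involution, the alternating sum of boundary strata of M̄_{0,Γ} for a graph Γ with two dominating vertices P, Q reduces to this sum for G = Γ∖{P,Q}, and it equals, up to sign, the number of acyclic orientations of G.) -/
/-- `L` is an ordered set partition of the vertex set of `G` all of whose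
blocks are independent sets of `G`: a list of pairwise disjoint nonempty
finite subsets of the vertices whose union is everything, with no two
elements of a block adjacent. -/
def IsIndepOSP {n : ℕ} (G : SimpleGraph (Fin n)) (L : List (Finset (Fin n))) : Prop :=
  (∀ B ∈ L, B.Nonempty) ∧ L.Pairwise Disjoint ∧
    L.foldr (· ∪ ·) ∅ = Finset.univ ∧
    ∀ B ∈ L, ∀ u ∈ B, ∀ v ∈ B, ¬ G.Adj u v

/-- `R` is an acyclic orientation of `G`: for every pair of adjacent vertices
exactly one of the two directions holds, `R` only relates adjacent vertices,
and the transitive closure of `R` is irreflexive. -/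
def IsAcyclicOrientation {V : Type*} (G : SimpleGraph V) (R : V → V → Prop) : Prop :=
  (∀ u v, R u v → G.Adj u v) ∧
  (∀ u v, G.Adj u v → (R u v ↔ ¬ R v u)) ∧
  ∀ v, ¬ Relation.TransGen R v v

open Finset

section

variable {V : Type*}

/-- The graph on all of `V` whose edges are those of `G` with both ends in `S`. -/
def SimpleGraph.restrictTo (G : SimpleGraph V) (S : Finset V) : SimpleGraph V where
  Adj u v := G.Adj u v ∧ u ∈ S ∧ v ∈ S
  symm := ⟨fun _ _ h => ⟨h.1.symm, h.2.2, h.2.1⟩⟩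
  loopless := ⟨fun _ h => G.irrefl h.1⟩

theorem restrictTo_acyclicOrientation_exists_source [Finite V] {G : SimpleGraph V} {S : Finset V}
    {R : V → V → Prop} (hR : IsAcyclicOrientation (G.restrictTo S) R) (hS : S.Nonempty) :
    ∃ v ∈ S, ∀ u, ¬ R u v := by
  have : Std.Irrefl (Relation.TransGen R) := ⟨hR.2.2⟩
  have : IsTrans V (Relation.TransGen R) := ⟨fun _ _ _ => Relation.TransGen.trans⟩
  obtain ⟨v, hv, hmin⟩ :=
    (Finite.wellFounded_of_trans_of_irrefl (Relation.TransGen R)).has_min (S : Set V) hS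
  exact ⟨v, hv, fun u huv => hmin u (hR.1 _ _ huv).2.1 (.single huv)⟩

theorem not_transGen_self_of_sources {R R' : V → V → Prop} {B : Finset V}
    (hB : ∀ u v, R u v → v ∉ B) (hRR' : ∀ u v, R u v → u ∉ B → R' u v)
    (hR' : ∀ v, ¬ Relation.TransGen R' v v) (v : V) : ¬ Relation.TransGen R v v := by
  have target : ∀ u w, Relation.TransGen R u w → w ∉ B := by
    intro u w h
    cases h with
    | single h => exact hB _ _ h
    | tail _ h => exact hB _ _ h
  have lift : ∀ u w, Relation.TransGen R u w → u ∉ B → Relation.TransGen R' u w := by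
    intro u w h hu
    induction h with
    | single h => exact .single (hRR' _ _ h hu)
    | tail h₁ h₂ ih => exact ih.tail (hRR' _ _ h₂ (target _ _ h₁))
  exact fun h => hR' v (lift v v h (target v v h))

variable [DecidableEq V]

/-- The list `L` is an ordered set partition of `S` into independent sets of `G`. -/
def IsIndepOSPOn (G : SimpleGraph V) (S : Finset V) (L : List (Finset V)) : Prop :=
  (∀ B ∈ L, B.Nonempty) ∧ L.Pairwise Disjoint ∧ L.foldr (· ∪ ·) ∅ = S ∧
    ∀ B ∈ L, ∀ u ∈ B, ∀ v ∈ B, ¬ G.Adj u v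

theorem disjoint_foldr_union {L : List (Finset V)} {B : Finset V} :
    Disjoint B (L.foldr (· ∪ ·) ∅) ↔ ∀ C ∈ L, Disjoint B C := by
  induction L with
  | nil => simp
  | cons C L ih => simp [ih, Finset.disjoint_union_right]

theorem isIndepOSPOn_nil {G : SimpleGraph V} {S : Finset V} :
    IsIndepOSPOn G S [] ↔ S = ∅ := by
  simp [IsIndepOSPOn, eq_comm]

theorem isIndepOSPOn_cons {G : SimpleGraph V} {S B : Finset V} {L : List (Finset V)} :
    IsIndepOSPOn G S (B :: L) ↔
      (B ⊆ S ∧ B.Nonempty ∧ ∀ u ∈ B, ∀ v ∈ B, ¬ G.Adj u v) ∧ IsIndepOSPOn G (S \ B) L := by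
  have key : ((∀ C ∈ L, Disjoint B C) ∧ B ∪ L.foldr (· ∪ ·) ∅ = S) ↔
      (B ⊆ S ∧ L.foldr (· ∪ ·) ∅ = S \ B) := by
    rw [← disjoint_foldr_union]
    constructor
    · rintro ⟨hd, rfl⟩
      exact ⟨subset_union_left, (union_sdiff_cancel_left hd).symm⟩
    · rintro ⟨hB, h⟩
      rw [h]
      exact ⟨disjoint_sdiff, union_sdiff_of_subset hB⟩
  simp only [IsIndepOSPOn, List.forall_mem_cons, List.pairwise_cons, List.foldr_cons]
  tauto

theorem setOf_isIndepOSPOn_empty (G : SimpleGraph V) :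
    {L | IsIndepOSPOn G ∅ L} = {[]} := by
  ext L
  cases L with
  | nil => simp [isIndepOSPOn_nil]
  | cons B L =>
    simp only [Set.mem_ofPred_eq, isIndepOSPOn_cons, Set.mem_singleton_iff, reduceCtorEq,
      iff_false, subset_empty]
    rintro ⟨⟨rfl, h, -⟩, -⟩
    exact not_nonempty_empty h

theorem IsIndepOSPOn.length_le_card {G : SimpleGraph V} {S : Finset V} {L : List (Finset V)}
    (h : IsIndepOSPOn G S L) : L.length ≤ #S := by
  induction L generalizing S with
  | nil => simp
  | cons B L ih =>
    obtain ⟨⟨hBS, hB, -⟩, hL⟩ := isIndepOSPOn_cons.1 h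
    have h₁ := ih hL
    have h₂ := card_sdiff_add_card_eq_card hBS
    have h₃ := hB.card_pos
    simp only [List.length_cons]
    omega

/-- Extend a relation by arrows along all edges of `G` from `B` to `S \ B`. -/
def addSources (G : SimpleGraph V) (S B : Finset V) (R : V → V → Prop) (u v : V) : Prop :=
  R u v ∨ (G.Adj u v ∧ u ∈ B ∧ v ∈ S \ B)

theorem isAcyclicOrientation_addSources {G : SimpleGraph V} {S B : Finset V} {R : V → V → Prop}
    (hBS : B ⊆ S) (hB : ∀ u ∈ B, ∀ v ∈ B, ¬ G.Adj u v)
    (hR : IsAcyclicOrientation (G.restrictTo (S \ B)) R) :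
    IsAcyclicOrientation (G.restrictTo S) (addSources G S B R) := by
  obtain ⟨hadj, hor, hac⟩ := hR
  have hadj' : ∀ u v, R u v → G.Adj u v ∧ u ∈ S \ B ∧ v ∈ S \ B := hadj
  refine ⟨?_, ?_, not_transGen_self_of_sources (B := B) (R' := R) ?_ ?_ hac⟩
  · rintro u v (h | ⟨h, hu, hv⟩)
    · have := hadj' _ _ h
      simp only [mem_sdiff] at this
      exact ⟨this.1, this.2.1.1, this.2.2.1⟩
    · exact ⟨h, hBS hu, (mem_sdiff.1 hv).1⟩
  · rintro u v ⟨h, hu, hv⟩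
    have h' := h.symm
    have h₁ := hadj' u v
    have h₂ := hadj' v u
    have h₃ := hB u
    have h₄ : u ∉ B → v ∉ B → (R u v ↔ ¬ R v u) := fun hu' hv' =>
      hor u v ⟨h, mem_sdiff.2 ⟨hu, hu'⟩, mem_sdiff.2 ⟨hv, hv'⟩⟩
    simp only [addSources, mem_sdiff] at *
    by_cases hu' : u ∈ B <;> by_cases hv' : v ∈ B <;> grind
  · rintro u v (h | ⟨-, -, h⟩)
    · exact (mem_sdiff.1 (hadj' _ _ h).2.2).2
    · exact (mem_sdiff.1 h).2
  · rintro u v (h | ⟨-, h, -⟩) hu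
    · exact h
    · exact absurd h hu

theorem isAcyclicOrientation_removeSources {G : SimpleGraph V} {S B : Finset V}
    {R : V → V → Prop} (hR : IsAcyclicOrientation (G.restrictTo S) R)
    (hsrc : ∀ v ∈ B, ∀ u, ¬ R u v) :
    IsAcyclicOrientation (G.restrictTo (S \ B)) (fun u v => R u v ∧ u ∉ B) := by
  obtain ⟨hadj, hor, hac⟩ := hR
  refine ⟨?_, ?_, fun v hv => hac v (hv.lift id fun _ _ h => h.1)⟩
  · rintro u v ⟨h, hu⟩
    obtain ⟨h₁, h₂, h₃⟩ := hadj _ _ h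
    exact ⟨h₁, mem_sdiff.2 ⟨h₂, hu⟩, mem_sdiff.2 ⟨h₃, fun hv => hsrc v hv u h⟩⟩
  · rintro u v ⟨h, hu, hv⟩
    rw [mem_sdiff] at hu hv
    have := hor u v ⟨h, hu.1, hv.1⟩
    tauto

theorem addSources_removeSources {G : SimpleGraph V} {S B : Finset V}
    {R : V → V → Prop} (hBS : B ⊆ S) (hR : IsAcyclicOrientation (G.restrictTo S) R)
    (hsrc : ∀ v ∈ B, ∀ u, ¬ R u v) :
    addSources G S B (fun u v => R u v ∧ u ∉ B) = R := by
  obtain ⟨hadj, hor, -⟩ := hR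
  ext u v
  constructor
  · rintro (h | ⟨h, hu, hv⟩)
    · exact h.1
    · exact (hor u v ⟨h, hBS hu, (mem_sdiff.1 hv).1⟩).2 (hsrc u hu v)
  · intro h
    by_cases hu : u ∈ B
    · obtain ⟨h₁, -, h₃⟩ := hadj _ _ h
      exact .inr ⟨h₁, hu, mem_sdiff.2 ⟨h₃, fun hv => hsrc v hv u h⟩⟩
    · exact .inl ⟨h, hu⟩

theorem removeSources_addSources {G : SimpleGraph V} {S B : Finset V} {R : V → V → Prop}
    (hR : IsAcyclicOrientation (G.restrictTo (S \ B)) R) :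
    (fun u v => addSources G S B R u v ∧ u ∉ B) = R := by
  ext u v
  have h : R u v → u ∉ B := fun h => (mem_sdiff.1 (hR.1 _ _ h).2.1).2
  simp only [addSources]
  tauto

theorem addSources_source {G : SimpleGraph V} {S B : Finset V} {R : V → V → Prop}
    (hR : IsAcyclicOrientation (G.restrictTo (S \ B)) R) :
    ∀ v ∈ B, ∀ u, ¬ addSources G S B R u v := by
  rintro v hv u (h | ⟨-, -, h⟩)
  · exact (mem_sdiff.1 (hR.1 _ _ h).2.2).2 hv
  · exact (mem_sdiff.1 h).2 hv

theorem sum_nonempty_subsets_neg_one_pow {T : Finset V} (hT : T.Nonempty) :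
    ∑ B ∈ T.powerset with B.Nonempty, (-1 : ℤ) ^ (#B + 1) = 1 := by
  have h := sum_powerset_neg_one_pow_card_of_nonempty hT
  have hfilter : T.powerset.filter (·.Nonempty) = T.powerset.erase ∅ := by
    ext B
    simp [nonempty_iff_ne_empty, and_comm]
  rw [← add_sum_erase _ _ (empty_mem_powerset T)] at h
  simp only [hfilter, pow_succ, ← sum_mul]
  simp only [card_empty, pow_zero] at h
  linarith

variable [Fintype V]

open Classical in
/-- The acyclic orientations of the subgraph of `G` induced on `S`. -/
noncomputable def acyclicOrientationsOn (G : SimpleGraph V) (S : Finset V) :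
    Finset (V → V → Prop) :=
  {R | IsAcyclicOrientation (G.restrictTo S) R}

theorem mem_acyclicOrientationsOn {G : SimpleGraph V} {S : Finset V} {R : V → V → Prop} :
    R ∈ acyclicOrientationsOn G S ↔ IsAcyclicOrientation (G.restrictTo S) R := by
  simp [acyclicOrientationsOn]

open Classical in
/-- The nonempty subsets of `S` that are independent in `G`. -/
noncomputable def indepSubsets (G : SimpleGraph V) (S : Finset V) : Finset (Finset V) :=
  {B | B ⊆ S ∧ B.Nonempty ∧ ∀ u ∈ B, ∀ v ∈ B, ¬ G.Adj u v}

theorem mem_indepSubsets {G : SimpleGraph V} {S B : Finset V} :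
    B ∈ indepSubsets G S ↔ B ⊆ S ∧ B.Nonempty ∧ ∀ u ∈ B, ∀ v ∈ B, ¬ G.Adj u v := by
  simp [indepSubsets]

open Classical in
theorem card_acyclicOrientationsOn_with_sources {G : SimpleGraph V} {S B : Finset V}
    (hB : B ∈ indepSubsets G S) :
    #{R ∈ acyclicOrientationsOn G S | ∀ v ∈ B, ∀ u, ¬ R u v} =
      #(acyclicOrientationsOn G (S \ B)) := by
  obtain ⟨hBS, -, hind⟩ := mem_indepSubsets.1 hB
  refine card_nbij' (fun R u v => R u v ∧ u ∉ B) (addSources G S B) ?_ ?_ ?_ ?_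
  · intro R hR
    simp only [coe_filter, Set.mem_ofPred_eq, mem_acyclicOrientationsOn] at hR
    exact mem_acyclicOrientationsOn.2 (isAcyclicOrientation_removeSources hR.1 hR.2)
  · intro R hR
    have hR := mem_acyclicOrientationsOn.1 hR
    simp only [coe_filter, Set.mem_ofPred_eq, mem_acyclicOrientationsOn]
    exact ⟨isAcyclicOrientation_addSources hBS hind hR, addSources_source hR⟩
  · intro R hR
    simp only [coe_filter, Set.mem_ofPred_eq, mem_acyclicOrientationsOn] at hR
    exact addSources_removeSources hBS hR.1 hR.2
  · intro R hR
    exact removeSources_addSources (mem_acyclicOrientationsOn.1 hR)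

theorem card_acyclicOrientationsOn_recursion (G : SimpleGraph V) {S : Finset V}
    (hS : S.Nonempty) :
    (#(acyclicOrientationsOn G S) : ℤ) =
      ∑ B ∈ indepSubsets G S, (-1) ^ (#B + 1) * (#(acyclicOrientationsOn G (S \ B)) : ℤ) := by
  classical
  let sources (R : V → V → Prop) : Finset V := {v ∈ S | ∀ u, ¬ R u v}
  calc (#(acyclicOrientationsOn G S) : ℤ)
      = ∑ R ∈ acyclicOrientationsOn G S,
          ∑ B ∈ (sources R).powerset with B.Nonempty, (-1 : ℤ) ^ (#B + 1) := by
        rw [card_eq_sum_ones, Nat.cast_sum]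
        refine sum_congr rfl fun R hR => ?_
        obtain ⟨v, hv, hsrc⟩ :=
          restrictTo_acyclicOrientation_exists_source (mem_acyclicOrientationsOn.1 hR) hS
        rw [sum_nonempty_subsets_neg_one_pow ⟨v, mem_filter.2 ⟨hv, hsrc⟩⟩, Nat.cast_one]
    _ = ∑ B ∈ indepSubsets G S,
          ∑ R ∈ acyclicOrientationsOn G S with ∀ v ∈ B, ∀ u, ¬ R u v, (-1 : ℤ) ^ (#B + 1) := by
        refine sum_comm' fun R B => ?_
        simp only [mem_filter, mem_powerset, mem_indepSubsets, mem_acyclicOrientationsOn,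
          sources, subset_iff]
        constructor
        · rintro ⟨hR, hB, hne⟩
          refine ⟨⟨hR, fun v hv => (hB hv).2⟩, fun v hv => (hB hv).1, hne, ?_⟩
          intro u hu v hv huv
          exact (hB hv).2 u ((hR.2.1 u v ⟨huv, (hB hu).1, (hB hv).1⟩).2 ((hB hu).2 v))
        · rintro ⟨⟨hR, hsrc⟩, hBS, hne, -⟩
          exact ⟨hR, fun v hv => ⟨hBS hv, hsrc v hv⟩, hne⟩
    _ = _ := by
        refine sum_congr rfl fun B hB => ?_
        rw [sum_const, card_acyclicOrientationsOn_with_sources hB, nsmul_eq_mul, mul_comm]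

theorem acyclicOrientationsOn_empty (G : SimpleGraph V) :
    acyclicOrientationsOn G ∅ = {fun _ _ => False} := by
  ext R
  rw [mem_acyclicOrientationsOn, mem_singleton]
  constructor
  · intro h
    ext u v
    simpa using fun huv => notMem_empty _ (h.1 u v huv).2.1
  · rintro rfl
    refine ⟨by simp, fun u v h => absurd h.2.1 (notMem_empty _), fun v h => ?_⟩
    cases h <;> assumption

theorem setOf_isIndepOSPOn_of_nonempty (G : SimpleGraph V) {S : Finset V} (hS : S.Nonempty) :
    {L | IsIndepOSPOn G S L} =
      ⋃ B ∈ (indepSubsets G S : Set (Finset V)),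
        List.cons B '' {L | IsIndepOSPOn G (S \ B) L} := by
  ext L
  cases L with
  | nil => simp [isIndepOSPOn_nil, hS.ne_empty]
  | cons B L => simp [isIndepOSPOn_cons, mem_indepSubsets, and_comm]

theorem finite_setOf_isIndepOSPOn (G : SimpleGraph V) (S : Finset V) :
    {L | IsIndepOSPOn G S L}.Finite :=
  (List.finite_length_le (Finset V) #S).subset fun _ h => h.length_le_card

theorem finsum_isIndepOSPOn (G : SimpleGraph V) (S : Finset V) :
    (∑ᶠ L ∈ {L | IsIndepOSPOn G S L}, (-1 : ℤ) ^ (#S - L.length)) =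
      #(acyclicOrientationsOn G S) := by
  induction S using Finset.strongInduction with
  | H S ih =>
    obtain rfl | hS := S.eq_empty_or_nonempty
    · simp [setOf_isIndepOSPOn_empty, acyclicOrientationsOn_empty]
    · rw [setOf_isIndepOSPOn_of_nonempty G hS, finsum_mem_biUnion, finsum_mem_coe_finset,
        card_acyclicOrientationsOn_recursion G hS]
      · refine sum_congr rfl fun B hB => ?_
        obtain ⟨hBS, hne, -⟩ := mem_indepSubsets.1 hB
        rw [← ih (S \ B) (sdiff_ssubset hBS hne),
          finsum_mem_image (List.cons_injective.injOn),
          mul_finsum_mem]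
        refine finsum_mem_congr rfl fun L hL => ?_
        have h₁ := IsIndepOSPOn.length_le_card hL
        have h₂ := card_sdiff_add_card_eq_card hBS
        have h₃ := hne.card_pos
        rw [← pow_add, List.length_cons,
          show #B + 1 + (#(S \ B) - L.length) = #S - (L.length + 1) + 2 by omega, pow_add]
        norm_num
      · intro B _ C _ hBC
        rw [Function.onFun, Set.disjoint_left]
        rintro _ ⟨L, -, rfl⟩ ⟨L', -, h⟩
        exact hBC (List.cons.inj h).1.symm
      · exact (indepSubsets G S).finite_toSet
      · exact fun B _ => (finite_setOf_isIndepOSPOn G _).image _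

end

/-- The signed sum `Σ (−1)^{n−r}` over all ordered set partitions
`(L_1,…,L_r)` of the vertex set of `G` into independent sets equals the
number of acyclic orientations of `G`. -/
theorem indep_osp_signed_sum_eq_card_acyclic_orientations
    (n : ℕ) (G : SimpleGraph (Fin n)) :
    (∑ᶠ L ∈ {L : List (Finset (Fin n)) | IsIndepOSP G L}, (-1 : ℤ) ^ (n - L.length))
      = Set.ncard {R : Fin n → Fin n → Prop | IsAcyclicOrientation G R} := by
  have hG : G.restrictTo univ = G := by
    ext u v
    simp [SimpleGraph.restrictTo]
  have hset : {R | IsAcyclicOrientation G R} = (acyclicOrientationsOn G univ : Set _) := by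
    ext R
    rw [mem_coe, mem_acyclicOrientationsOn, hG, Set.mem_ofPred_eq]
  have h := finsum_isIndepOSPOn G univ
  rw [card_univ, Fintype.card_fin] at h
  rw [hset, Set.ncard_coe_finset]
  exact h
end

section
/- Let G be a simple graph on the linearly ordered vertex set {1,…,n}. The number of orderings (w_1,…,w_n) of the vertices of G (bijections from positions {1,…,n} to vertices) with the property that for all positions a < b with w_a < w_b there exists l with a ≤ l < b such that w_l is adjacent to w_b in G, equals the number of acyclic orientations of G. (These orderings are exactly the fixed points of the paper's left-right involution; the bijection sends an acyclic orientation to the ordering obtained by repeatedly removing and recording the largest remaining source.) -/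
/-- The ordering `w` satisfies the left-right condition: for all positions `a < b` with
`w a < w b` some position `l` with `a ≤ l < b` carries a neighbour of `w b`. -/
def IsSpecialOrdering {n : ℕ} (G : SimpleGraph (Fin n)) (w : Fin n ≃ Fin n) : Prop :=
  ∀ a b : Fin n, a < b → w a < w b → ∃ l : Fin n, a ≤ l ∧ l < b ∧ G.Adj (w l) (w b)

/-- The orientation of `G` that directs every edge from the earlier to the later vertex of `w`. -/
def orientationOfOrdering {n : ℕ} (G : SimpleGraph (Fin n)) (w : Fin n ≃ Fin n) :
    Fin n → Fin n → Prop :=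
  fun u v => G.Adj u v ∧ w.symm u < w.symm v

/-- `v` is the largest source of `R` restricted to the complement of `S`. -/
def IsLargestSource {V : Type*} [LinearOrder V] (R : V → V → Prop) (S : Finset V) (v : V) : Prop :=
  IsGreatest {x | x ∉ S ∧ ∀ u, R u x → u ∈ S} v

theorem isAcyclicOrientation_orientationOfOrdering {n : ℕ} (G : SimpleGraph (Fin n))
    (w : Fin n ≃ Fin n) : IsAcyclicOrientation G (orientationOfOrdering G w) := by
  refine ⟨fun u v h => h.1, fun u v h => ⟨fun h₁ h₂ => lt_asymm h₁.2 h₂.2, fun h₁ => ⟨h, ?_⟩⟩,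
    fun v hv => ?_⟩
  · by_contra h₂
    exact h₁ ⟨h.symm, lt_of_le_of_ne (not_lt.mp h₂) fun e => h.ne (w.symm.injective e).symm⟩
  · have key : ∀ x y, Relation.TransGen (orientationOfOrdering G w) x y →
        w.symm x < w.symm y := by
      intro x y h
      induction h with
      | single h => exact h.2
      | tail _ h ih => exact ih.trans h.2
    exact lt_irrefl _ (key v v hv)

/-- Two special orderings that agree before position `a` and induce the same orientation
satisfy `w' a ≤ w a`. -/
theorem IsSpecialOrdering.apply_le {n : ℕ} {G : SimpleGraph (Fin n)} {w w' : Fin n ≃ Fin n}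
    (hw : IsSpecialOrdering G w) (h : orientationOfOrdering G w = orientationOfOrdering G w')
    {a : Fin n} (ih : ∀ c < a, w c = w' c) : w' a ≤ w a := by
  by_contra! hlt
  obtain ⟨b, hb⟩ := w.surjective (w' a)
  have hab : a < b := by
    rcases lt_trichotomy a b with hab | rfl | hba
    · exact hab
    · exact absurd hb hlt.ne
    · exact absurd (w'.injective ((ih b hba).symm.trans hb)) hba.ne
  obtain ⟨l, hal, hlb, hadj⟩ := hw a b hab (hb ▸ hlt)
  have hR : orientationOfOrdering G w (w l) (w b) := ⟨hadj, by simpa using hlb⟩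
  rw [h, hb] at hR
  have hc : w'.symm (w l) < a := by simpa using hR.2
  have hcl : w'.symm (w l) = l := w.injective (by simpa using ih _ hc)
  exact absurd (hcl ▸ hc) (not_lt.mpr hal)

theorem IsSpecialOrdering.eq_of_orientation_eq {n : ℕ} {G : SimpleGraph (Fin n)}
    {w w' : Fin n ≃ Fin n} (hw : IsSpecialOrdering G w) (hw' : IsSpecialOrdering G w')
    (h : orientationOfOrdering G w = orientationOfOrdering G w') : w = w' := by
  ext1 a
  induction a using WellFoundedLT.induction with
  | ind a ih =>
    exact le_antisymm (hw'.apply_le h.symm fun c hc => (ih c hc).symm) (hw.apply_le h ih)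

theorem IsAcyclicOrientation.exists_isLargestSource {V : Type*} [LinearOrder V] [Fintype V]
    {G : SimpleGraph V} {R : V → V → Prop} (hR : IsAcyclicOrientation G R) {S : Finset V}
    (hS : S ≠ Finset.univ) : ∃ v, IsLargestSource R S v := by
  have : Std.Irrefl (Relation.TransGen R) := ⟨hR.2.2⟩
  have hwf : WellFounded (Relation.TransGen R) := Finite.wellFounded_of_trans_of_irrefl _
  obtain ⟨x, hx⟩ : ∃ x, x ∉ S := by simpa [Finset.eq_univ_iff_forall] using hS
  obtain ⟨m, hm, hmin⟩ := hwf.has_min {x | x ∉ S} ⟨x, hx⟩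
  have hne : {x | x ∉ S ∧ ∀ u, R u x → u ∈ S}.Nonempty :=
    ⟨m, hm, fun u hu => by_contra fun huS => hmin u huS (.single hu)⟩
  obtain ⟨v, hv, hmax⟩ := Set.exists_max_image _ id (Set.toFinite _) hne
  exact ⟨v, hv, hmax⟩

/-- Repeatedly removing the largest source lists all vertices. -/
theorem IsAcyclicOrientation.exists_greedy_ordering {n : ℕ} {G : SimpleGraph (Fin n)}
    {R : Fin n → Fin n → Prop} (hR : IsAcyclicOrientation G R) :
    ∃ w : Fin n ≃ Fin n, ∀ a, IsLargestSource R ((Finset.Iio a).image w) (w a) := by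
  have hex : ∀ S : Finset (Fin n), S ≠ Finset.univ → ∃ v, IsLargestSource R S v :=
    fun S hS => hR.exists_isLargestSource hS
  rcases n with _ | n
  · exact ⟨Equiv.refl _, fun a => a.elim0⟩
  choose! step hstep using hex
  let S : ℕ → Finset (Fin (n + 1)) := fun k => Nat.rec ∅ (fun _ T => insert (step T) T) k
  have hS : ∀ k, S k = (Finset.range k).image fun j => step (S j) := by
    intro k
    induction k with
    | zero => rfl
    | succ k ih =>
      rw [Finset.range_add_one, Finset.image_insert, ← ih]
  have hlargest : ∀ k < n + 1, IsLargestSource R (S k) (step (S k)) := by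
    intro k hk
    refine hstep _ fun h => ?_
    have hcard : (S k).card ≤ k := by
      rw [hS k]
      simpa using Finset.card_image_le (s := Finset.range k) (f := fun j => step (S j))
    rw [h, Finset.card_univ, Fintype.card_fin] at hcard
    omega
  have hne : ∀ i j : Fin (n + 1), i < j → step (S i) ≠ step (S j) := by
    intro i j hij h
    refine (hlargest j j.2).1.1 ?_
    rw [← h, hS j]
    exact Finset.mem_image_of_mem (fun j => step (S j)) (Finset.mem_range.mpr hij)
  have hinj : Function.Injective fun i : Fin (n + 1) => step (S i) := by
    intro i j hij
    rcases lt_trichotomy i j with h | h | h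
    · exact absurd hij (hne i j h)
    · exact h
    · exact absurd hij.symm (hne j i h)
  refine ⟨Equiv.ofBijective _ (Finite.injective_iff_bijective.mp hinj), fun a => ?_⟩
  have himage : (Finset.Iio a).image (fun i : Fin (n + 1) => step (S i)) = S a := by
    rw [hS a]
    ext v
    simp only [Finset.mem_image, Finset.mem_Iio, Finset.mem_range]
    exact ⟨fun ⟨i, hi, h⟩ => ⟨i, hi, h⟩, fun ⟨j, hj, h⟩ => ⟨⟨j, hj.trans a.2⟩, hj, h⟩⟩
  simpa [himage] using hlargest a a.2

theorem IsAcyclicOrientation.exists_isSpecialOrdering {n : ℕ} {G : SimpleGraph (Fin n)}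
    {R : Fin n → Fin n → Prop} (hR : IsAcyclicOrientation G R) :
    ∃ w, IsSpecialOrdering G w ∧ orientationOfOrdering G w = R := by
  obtain ⟨w, hw⟩ := hR.exists_greedy_ordering
  have hlt : ∀ u v, R u v → w.symm u < w.symm v := by
    intro u v huv
    obtain ⟨j, hj, rfl⟩ := Finset.mem_image.mp ((hw (w.symm v)).1.2 u (by simpa using huv))
    simpa using hj
  refine ⟨w, fun a b hab hwab => ?_, ?_⟩
  · by_contra! hno
    refine hwab.not_ge ((hw a).2 ⟨by simpa using hab.le, fun u hu => ?_⟩)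
    have hub : w.symm u < b := by simpa using hlt _ _ hu
    refine Finset.mem_image.mpr ⟨w.symm u, Finset.mem_Iio.mpr ?_, by simp⟩
    by_contra! hau
    exact hno _ hau hub (by simpa using hR.1 _ _ hu)
  · ext u v
    refine ⟨fun ⟨hadj, h⟩ => ?_, fun h => ⟨hR.1 _ _ h, hlt _ _ h⟩⟩
    exact (hR.2.1 u v hadj).mpr fun h' => lt_asymm h (hlt _ _ h')

/-- The number of orderings `(w_1,…,w_n)` of the vertices of `G` (bijections
from positions to vertices) such that for all positions `a < b` with
`w a < w b` there is a position `l` with `a ≤ l < b` and `w l` adjacent to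
`w b`, equals the number of acyclic orientations of `G`. -/
theorem card_special_orderings_eq_card_acyclic_orientations
    (n : ℕ) (G : SimpleGraph (Fin n)) :
    Set.ncard {w : Fin n ≃ Fin n |
        ∀ a b : Fin n, a < b → w a < w b →
          ∃ l : Fin n, a ≤ l ∧ l < b ∧ G.Adj (w l) (w b)}
      = Set.ncard {R : Fin n → Fin n → Prop | IsAcyclicOrientation G R} := by
  refine Set.ncard_congr (fun w _ => orientationOfOrdering G w)
    (fun w _ => isAcyclicOrientation_orientationOfOrdering G w)
    (fun w w' hw hw' h => IsSpecialOrdering.eq_of_orientation_eq hw hw' h) fun R hR => ?_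
  obtain ⟨w, hw, rfl⟩ := IsAcyclicOrientation.exists_isSpecialOrdering hR
  exact ⟨w, hw, rfl⟩
end
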